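/- arXiv:1705.10071 — 5 statements merged into one kernel-verified Lean document; each statement's English description precedes it below -/
import Mathlib

section
/- Let n ≥ 1 be an integer, β > 0, C > 0, α ∈ (0,1], and y ∈ ℝⁿ. Suppose F : ℝⁿ \ {y} → ℝ is differentiable on ℝⁿ \ {y} and satisfies |F(x)| ≤ C‖x−y‖^{−β} and ‖DF(x)‖ ≤ C‖x−y‖^{−β−1} for all x ≠ y, where DF(x) is the Fréchet derivative. Then for all x₁, x₂ ∈ ℝⁿ \ {y}, |F(x₁) − F(x₂)| ≤ 2^{β+3} C ‖x₁−x₂‖^{α} / (min(‖x₁−y‖, ‖x₂−y‖))^{β+α}. -/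
open Real

/-!
Put `m = min ‖x₁ - y‖ ‖x₂ - y‖` and `t = ‖x₁ - x₂‖ / m`; the claim is scale invariant and reads
`‖F x₁ - F x₂‖ ≤ 2 ^ (β + 3) * (C * m ^ (-β)) * t ^ α`. If `t ≥ 1 / 2`, the triangle inequality
bounds the left side by `2 * (C * m ^ (-β))`, and `1 / 2 ≤ t ^ α`. If `t ≤ 1 / 2`, the segment from
`x₁` to `x₂` stays at distance at least `m / 2` from `y`, so the mean value inequality bounds the
left side by `2 ^ (β + 1) * (C * m ^ (-β)) * t`, and `t ≤ t ^ α`.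
-/

section Rpow

variable {a C m r p t d α : ℝ}

theorem half_le_rpow (ht : 1 / 2 ≤ t) (hα : 0 ≤ α) (hα1 : α ≤ 1) : 1 / 2 ≤ t ^ α :=
  calc (1 / 2 : ℝ) ≤ (1 / 2) ^ α := self_le_rpow_of_le_one (by norm_num) (by norm_num) hα1
    _ ≤ t ^ α := rpow_le_rpow (by norm_num) ht hα

theorem nonneg_of_le_mul_rpow (ha : 0 ≤ a) (hr : 0 < r) (h : a ≤ C * r ^ p) : 0 ≤ C :=
  nonneg_of_mul_nonneg_left (ha.trans h) (rpow_pos_of_pos hr p)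

theorem le_mul_rpow_of_le_mul_rpow (ha : 0 ≤ a) (hm : 0 < m) (hmr : m ≤ r) (hp : p ≤ 0)
    (h : a ≤ C * r ^ p) : a ≤ C * m ^ p :=
  h.trans <| mul_le_mul_of_nonneg_left (rpow_le_rpow_of_nonpos hm hmr hp)
    (nonneg_of_le_mul_rpow ha (hm.trans_le hmr) h)

theorem rpow_neg_mul_div_rpow (hd : 0 ≤ d) (hm : 0 < m) (β α : ℝ) :
    m ^ (-β) * (d / m) ^ α = d ^ α / m ^ (β + α) := by
  rw [div_rpow hd hm.le, rpow_add hm, rpow_neg hm.le]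
  field_simp

theorem half_rpow_neg_sub_one_mul (hm : 0 < m) (β d : ℝ) :
    (m / 2) ^ (-β - 1) * d = 2 ^ (β + 1) * m ^ (-β) * (d / m) := by
  rw [div_rpow hm.le zero_le_two, rpow_sub_one hm.ne', ← neg_add', rpow_neg zero_le_two]
  field_simp

end Rpow

theorem norm_sub_le_mul_rpow_of_half_le {G : Type*} [SeminormedAddCommGroup G] {u v : G}
    {K t α : ℝ} (hu : ‖u‖ ≤ K) (hv : ‖v‖ ≤ K) (ht : 1 / 2 ≤ t) (hα : 0 ≤ α) (hα1 : α ≤ 1) :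
    ‖u - v‖ ≤ 4 * K * t ^ α := by
  have hK : 0 ≤ K := (norm_nonneg u).trans hu
  calc ‖u - v‖ ≤ K + K := norm_sub_le_of_le hu hv
    _ = 4 * K * (1 / 2) := by ring
    _ ≤ 4 * K * t ^ α := by gcongr; exact half_le_rpow ht hα hα1

section Decay

variable {E G : Type*} {y x₁ x₂ : E} {β C m p α : ℝ}

theorem half_le_norm_sub_of_mem_segment [SeminormedAddCommGroup E] [NormedSpace ℝ E] {z : E}
    (hx₁ : m ≤ ‖x₁ - y‖) (hd : ‖x₁ - x₂‖ ≤ m / 2) (hz : z ∈ segment ℝ x₁ x₂) :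
    m / 2 ≤ ‖z - y‖ := by
  have hzx₁ : ‖x₁ - z‖ ≤ ‖x₁ - x₂‖ := by
    simpa only [norm_sub_rev] using norm_sub_le_of_mem_segment hz
  linarith [norm_sub_le_norm_sub_add_norm_sub x₁ z y]

variable [NormedAddCommGroup E] [NormedSpace ℝ E] [NormedAddCommGroup G] [NormedSpace ℝ G]
  {F : E → G}

theorem norm_image_sub_le_of_norm_fderiv_le_rpow (hp : p ≤ 0) (hm : 0 < m)
    (hdiff : ∀ x, x ≠ y → DifferentiableAt ℝ F x)
    (hDF : ∀ x, x ≠ y → ‖fderiv ℝ F x‖ ≤ C * ‖x - y‖ ^ p)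
    (hx₁ : m ≤ ‖x₁ - y‖) (hd : ‖x₁ - x₂‖ ≤ m / 2) :
    ‖F x₁ - F x₂‖ ≤ C * (m / 2) ^ p * ‖x₁ - x₂‖ := by
  have dist_ge : ∀ z ∈ segment ℝ x₁ x₂, m / 2 ≤ ‖z - y‖ := fun _ =>
    half_le_norm_sub_of_mem_segment hx₁ hd
  have ne_center : ∀ z ∈ segment ℝ x₁ x₂, z ≠ y := fun z hz =>
    norm_sub_pos_iff.1 ((half_pos hm).trans_le (dist_ge z hz))
  have fderiv_le : ∀ z ∈ segment ℝ x₁ x₂, ‖fderiv ℝ F z‖ ≤ C * (m / 2) ^ p := fun z hz =>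
    le_mul_rpow_of_le_mul_rpow (norm_nonneg _) (half_pos hm) (dist_ge z hz) hp
      (hDF z (ne_center z hz))
  exact (convex_segment x₁ x₂).norm_image_sub_le_of_norm_fderiv_le
    (fun z hz => hdiff z (ne_center z hz)) fderiv_le
    (right_mem_segment ℝ x₁ x₂) (left_mem_segment ℝ x₁ x₂)

theorem norm_image_sub_le_mul_rpow_of_le_half (hβ : -1 ≤ β) (hα1 : α ≤ 1) (hm : 0 < m)
    (hdiff : ∀ x, x ≠ y → DifferentiableAt ℝ F x)
    (hDF : ∀ x, x ≠ y → ‖fderiv ℝ F x‖ ≤ C * ‖x - y‖ ^ (-β - 1))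
    (hx₁ : m ≤ ‖x₁ - y‖) (ht : ‖x₁ - x₂‖ / m ≤ 1 / 2) :
    ‖F x₁ - F x₂‖ ≤ 2 ^ (β + 1) * (C * m ^ (-β)) * (‖x₁ - x₂‖ / m) ^ α := by
  have hr : 0 < ‖x₁ - y‖ := hm.trans_le hx₁
  have hC : 0 ≤ C :=
    nonneg_of_le_mul_rpow (norm_nonneg _) hr (hDF x₁ (norm_sub_pos_iff.1 hr))
  have hd : ‖x₁ - x₂‖ ≤ m / 2 := by linarith [(div_le_iff₀ hm).1 ht]
  calc ‖F x₁ - F x₂‖ ≤ C * (m / 2) ^ (-β - 1) * ‖x₁ - x₂‖ :=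
        norm_image_sub_le_of_norm_fderiv_le_rpow (by linarith) hm hdiff hDF hx₁ hd
    _ = 2 ^ (β + 1) * (C * m ^ (-β)) * (‖x₁ - x₂‖ / m) := by
      rw [mul_assoc, half_rpow_neg_sub_one_mul hm]
      ring
    _ ≤ 2 ^ (β + 1) * (C * m ^ (-β)) * (‖x₁ - x₂‖ / m) ^ α := by
      gcongr
      exact self_le_rpow_of_le_one (by positivity) (by linarith) hα1

theorem stmt_0_general (hβ : 0 ≤ β) (hα : 0 ≤ α) (hα1 : α ≤ 1)
    (hdiff : ∀ x, x ≠ y → DifferentiableAt ℝ F x)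
    (hF : ∀ x, x ≠ y → ‖F x‖ ≤ C * ‖x - y‖ ^ (-β))
    (hDF : ∀ x, x ≠ y → ‖fderiv ℝ F x‖ ≤ C * ‖x - y‖ ^ (-β - 1))
    (hx₁ : x₁ ≠ y) (hx₂ : x₂ ≠ y) :
    ‖F x₁ - F x₂‖ ≤
      2 ^ (β + 3) * C * ‖x₁ - x₂‖ ^ α / (min ‖x₁ - y‖ ‖x₂ - y‖) ^ (β + α) := by
  set m := min ‖x₁ - y‖ ‖x₂ - y‖
  have hm : 0 < m := lt_min (norm_sub_pos_iff.2 hx₁) (norm_sub_pos_iff.2 hx₂)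
  have hC : 0 ≤ C :=
    nonneg_of_le_mul_rpow (norm_nonneg _) (norm_sub_pos_iff.2 hx₁) (hF x₁ hx₁)
  have norm_le : ∀ x, x ≠ y → m ≤ ‖x - y‖ → ‖F x‖ ≤ C * m ^ (-β) := fun x hx hmx =>
    le_mul_rpow_of_le_mul_rpow (norm_nonneg _) hm hmx (neg_nonpos.2 hβ) (hF x hx)
  suffices h : ‖F x₁ - F x₂‖ ≤ 2 ^ (β + 3) * (C * m ^ (-β)) * (‖x₁ - x₂‖ / m) ^ α by
    rwa [← mul_assoc, mul_assoc, rpow_neg_mul_div_rpow (norm_nonneg _) hm, ← mul_div_assoc] at h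
  rcases le_total (1 / 2) (‖x₁ - x₂‖ / m) with ht | ht
  · have four_le : (4 : ℝ) ≤ 2 ^ (β + 3) := calc
      (4 : ℝ) = 2 ^ (2 : ℝ) := by norm_num
      _ ≤ 2 ^ (β + 3) := rpow_le_rpow_of_exponent_le one_le_two (by linarith)
    refine (norm_sub_le_mul_rpow_of_half_le (norm_le x₁ hx₁ (min_le_left _ _))
      (norm_le x₂ hx₂ (min_le_right _ _)) ht hα hα1).trans ?_
    gcongr
  · refine (norm_image_sub_le_mul_rpow_of_le_half (by linarith) hα1 hm hdiff hDF
      (min_le_left _ _) ht).trans ?_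
    gcongr <;> norm_num

end Decay

/-- Quantitative Hölder estimate from pointwise decay of a function and its gradient
(underlying Lemma 2.3 of the paper). -/
theorem stmt_0 (n : ℕ) (hn : 1 ≤ n) (β C α : ℝ) (hβ : 0 < β) (hC : 0 < C)
    (hα : 0 < α) (hα1 : α ≤ 1) (y : EuclideanSpace ℝ (Fin n))
    (F : EuclideanSpace ℝ (Fin n) → ℝ)
    (hdiff : ∀ x, x ≠ y → DifferentiableAt ℝ F x)
    (hF : ∀ x, x ≠ y → |F x| ≤ C * ‖x - y‖ ^ (-β))
    (hDF : ∀ x, x ≠ y → ‖fderiv ℝ F x‖ ≤ C * ‖x - y‖ ^ (-β - 1)) :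
    ∀ x₁ x₂, x₁ ≠ y → x₂ ≠ y →
      |F x₁ - F x₂| ≤
        (2 : ℝ) ^ (β + 3) * C * ‖x₁ - x₂‖ ^ α / (min ‖x₁ - y‖ ‖x₂ - y‖) ^ (β + α) :=
  fun _ _ hx₁ hx₂ => stmt_0_general hβ.le hα.le hα1 hdiff hF hDF hx₁ hx₂
end

section
/- Let k ≥ 1 be an integer and let ε be a real number with 0 < ε ≤ 1/(8k). If w₁, …, w_k are vectors in a real inner product space H satisfying |⟨wᵢ, wⱼ⟩ − δᵢⱼ| ≤ ε for all 1 ≤ i, j ≤ k, then for every choice of real numbers η₁, …, η_{k−1} one has ‖w_k − Σ_{i=1}^{k−1} ηᵢ wᵢ‖² ≥ 1/2. -/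
open scoped RealInnerProductSpace

/-!
The Gram matrix of an almost orthonormal family differs from the identity by a matrix with entries
of size at most `ε`, whose quadratic form at `c` is at most `ε (∑ ‖c i‖)² ≤ ε n ∑ ‖c i‖²` by
Cauchy–Schwarz. Hence `‖∑ c i • w i‖² ≥ (1 - ε n) ∑ ‖c i‖²`, and a linear combination in which some
vector has coefficient `1` satisfies `∑ ‖c i‖² ≥ 1`, whatever its other coefficients are.
-/

theorem norm_sum_sum_mul_mul_le {ι κ R : Type*} [NonUnitalSeminormedRing R] {s : Finset ι}
    {t : Finset κ} {A : ι → κ → R} {ε : ℝ} (hA : ∀ i ∈ s, ∀ j ∈ t, ‖A i j‖ ≤ ε)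
    (a : ι → R) (b : κ → R) :
    ‖∑ i ∈ s, ∑ j ∈ t, a i * A i j * b j‖ ≤ ε * ((∑ i ∈ s, ‖a i‖) * ∑ j ∈ t, ‖b j‖) := by
  have entry_bound : ∀ i ∈ s, ∀ j ∈ t, ‖a i * A i j * b j‖ ≤ ε * (‖a i‖ * ‖b j‖) :=
    fun i hi j hj => calc
      ‖a i * A i j * b j‖ ≤ ‖a i‖ * ‖A i j‖ * ‖b j‖ := norm_mul₃_le
      _ ≤ ‖a i‖ * ε * ‖b j‖ := by gcongr; exact hA i hi j hj
      _ = ε * (‖a i‖ * ‖b j‖) := by ring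
  calc
    ‖∑ i ∈ s, ∑ j ∈ t, a i * A i j * b j‖ ≤ ∑ i ∈ s, ∑ j ∈ t, ε * (‖a i‖ * ‖b j‖) :=
      norm_sum_le_of_le s fun i hi => norm_sum_le_of_le t (entry_bound i hi)
    _ = ε * ((∑ i ∈ s, ‖a i‖) * ∑ j ∈ t, ‖b j‖) := by
      rw [Finset.sum_mul_sum]
      simp only [Finset.mul_sum]

section

variable {𝕜 ι E : Type*} [RCLike 𝕜] [DecidableEq ι] [SeminormedAddCommGroup E]
  [InnerProductSpace 𝕜 E]

variable (𝕜) in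
/-- A family of vectors is almost orthonormal on `s`, with error `ε`, if the entries of its Gram
matrix over `s` are within `ε` of those of the identity matrix. One `ε` bounds both the
deviation of the squared norms from `1` and that of the mutual inner products from `0`. -/
def AlmostOrthonormalOn (ε : ℝ) (w : ι → E) (s : Finset ι) : Prop :=
  ∀ i ∈ s, ∀ j ∈ s, ‖inner 𝕜 (w i) (w j) - if i = j then 1 else 0‖ ≤ ε

namespace AlmostOrthonormalOn

variable {ε : ℝ} {w : ι → E} {s : Finset ι}

theorem nonneg (hw : AlmostOrthonormalOn 𝕜 ε w s) (hs : s.Nonempty) : 0 ≤ ε :=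
  let ⟨i, hi⟩ := hs
  (norm_nonneg _).trans (hw i hi i hi)

theorem abs_norm_sum_smul_sq_sub_sum_norm_sq_le (hw : AlmostOrthonormalOn 𝕜 ε w s) (c : ι → 𝕜) :
    |‖∑ i ∈ s, c i • w i‖ ^ 2 - ∑ i ∈ s, ‖c i‖ ^ 2| ≤ ε * (∑ i ∈ s, ‖c i‖) ^ 2 := by
  have gram_expansion : ((‖∑ i ∈ s, c i • w i‖ ^ 2 : ℝ) : 𝕜) =
      ∑ i ∈ s, ∑ j ∈ s, star (c i) * inner 𝕜 (w i) (w j) * c j := by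
    rw [RCLike.ofReal_pow, ← inner_self_eq_norm_sq_to_K (𝕜 := 𝕜), sum_inner]
    refine Finset.sum_congr rfl fun i _ => ?_
    rw [inner_sum]
    refine Finset.sum_congr rfl fun j _ => ?_
    rw [inner_smul_left, inner_smul_right, starRingEnd_apply]
    ring
  have identity_expansion : ((∑ i ∈ s, ‖c i‖ ^ 2 : ℝ) : 𝕜) =
      ∑ i ∈ s, ∑ j ∈ s, star (c i) * (if i = j then 1 else 0) * c j := by
    rw [RCLike.ofReal_sum]
    refine Finset.sum_congr rfl fun i hi => ?_
    simp [hi, RCLike.conj_mul]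
  rw [← RCLike.norm_ofReal (K := 𝕜), RCLike.ofReal_sub, gram_expansion, identity_expansion]
  simpa only [← Finset.sum_sub_distrib, ← sub_mul, ← mul_sub, norm_star, ← sq] using
    norm_sum_sum_mul_mul_le hw (fun i => star (c i)) c

theorem one_sub_mul_card_mul_sum_norm_sq_le (hw : AlmostOrthonormalOn 𝕜 ε w s) (c : ι → 𝕜) :
    (1 - ε * s.card) * ∑ i ∈ s, ‖c i‖ ^ 2 ≤ ‖∑ i ∈ s, c i • w i‖ ^ 2 := by
  obtain rfl | hs := s.eq_empty_or_nonempty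
  · simp
  have cauchy_schwarz : ε * (∑ i ∈ s, ‖c i‖) ^ 2 ≤ ε * (s.card * ∑ i ∈ s, ‖c i‖ ^ 2) :=
    mul_le_mul_of_nonneg_left sq_sum_le_card_mul_sum_sq (hw.nonneg hs)
  linarith [(abs_le.mp (hw.abs_norm_sum_smul_sq_sub_sum_norm_sq_le c)).1]

theorem one_sub_mul_card_le_norm_sum_smul_sq (hw : AlmostOrthonormalOn 𝕜 ε w s) {c : ι → 𝕜}
    {a : ι} (ha : a ∈ s) (hca : 1 ≤ ‖c a‖) :
    1 - ε * s.card ≤ ‖∑ i ∈ s, c i • w i‖ ^ 2 := by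
  obtain hneg | hpos := le_total (1 - ε * s.card) 0
  · exact hneg.trans (sq_nonneg _)
  have one_le_sum : 1 ≤ ∑ i ∈ s, ‖c i‖ ^ 2 :=
    (one_le_pow₀ hca).trans
      (Finset.single_le_sum (f := fun i => ‖c i‖ ^ 2) (fun i _ => sq_nonneg _) ha)
  exact (le_mul_of_one_le_right hpos one_le_sum).trans
    (hw.one_sub_mul_card_mul_sum_norm_sq_le c)

end AlmostOrthonormalOn

theorem stmt_1_general {ε : ℝ} {w : ι → E} {s : Finset ι} {a : ι} (ha : a ∉ s)
    (hw : AlmostOrthonormalOn 𝕜 ε w (insert a s)) (η : ι → 𝕜) :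
    1 - ε * (s.card + 1) ≤ ‖w a - ∑ i ∈ s, η i • w i‖ ^ 2 := by
  let c : ι → 𝕜 := Function.update (-η) a 1
  have sum_eq : ∑ i ∈ insert a s, c i • w i = w a - ∑ i ∈ s, η i • w i := by
    have off_a : ∀ i ∈ s, c i • w i = -(η i • w i) := fun i hi => by
      simp [c, ne_of_mem_of_not_mem hi ha]
    rw [Finset.sum_insert ha, Finset.sum_congr rfl off_a, Finset.sum_neg_distrib, sub_eq_add_neg]
    simp [c]
  have lower_bound := hw.one_sub_mul_card_le_norm_sum_smul_sq (c := c)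
    (Finset.mem_insert_self a s) (by simp [c])
  rwa [sum_eq, Finset.card_insert_of_notMem ha, Nat.cast_add_one] at lower_bound

end

/-- Key linear-algebra claim in the proof of part (b) of the Transformation Theorem:
an almost orthonormal family w₀, …, w_{k-1} satisfies
‖w_{k-1} - Σ_{i<k-1} ηᵢ wᵢ‖² ≥ 1/2 for any coefficients η. -/
theorem stmt_1 (k : ℕ) (hk : 1 ≤ k) (ε : ℝ) (hε : 0 < ε) (hε' : ε ≤ 1 / (8 * k))
    {H : Type*} [NormedAddCommGroup H] [InnerProductSpace ℝ H]
    (w : ℕ → H)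
    (hw : ∀ i < k, ∀ j < k, |⟪w i, w j⟫ - if i = j then 1 else 0| ≤ ε) :
    ∀ η : ℕ → ℝ, 1 / 2 ≤ ‖w (k - 1) - ∑ i ∈ Finset.range (k - 1), η i • w i‖ ^ 2 := by
  intro η
  obtain ⟨n, rfl⟩ := Nat.exists_eq_add_of_le' hk
  have almost_orthonormal : AlmostOrthonormalOn ℝ ε w (insert n (Finset.range n)) := by
    simpa only [AlmostOrthonormalOn, ← Finset.range_add_one, Finset.mem_range,
      Real.norm_eq_abs] using hw
  have lower_bound := stmt_1_general Finset.notMem_range_self almost_orthonormal η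
  rw [Finset.card_range] at lower_bound
  rw [le_div_iff₀ (by positivity), Nat.cast_add_one] at hε'
  rw [Nat.add_sub_cancel]
  linarith
end

section
/- Let k ≥ 1 be an integer, H a real inner product space, and f₁, …, f_k ∈ H with ‖fᵢ‖ ≤ 2 for all i. Let A = (a_{ij}) be a k×k real lower triangular matrix (a_{ij} = 0 for j > i) with positive diagonal entries, and set vᵢ = Σ_{j=1}^{i} a_{ij} f_j. If |⟨vᵢ, vⱼ⟩ − δᵢⱼ| ≤ 1/(8k) for all 1 ≤ i, j ≤ k, then a_{ii} ≥ 1/3 for every 1 ≤ i ≤ k. -/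
open scoped RealInnerProductSpace

/-!
Write `f = A⁻¹ v`. The matrix `A⁻¹` is lower triangular with diagonal entries `(A i i)⁻¹`, and
almost orthonormality of `v` bounds `‖f i‖ ^ 2` below by a multiple of the sum of the squared
entries in row `i` of `A⁻¹`. Hence `‖f i‖` is at least a multiple of `(A i i)⁻¹`. That `A` is
invertible comes from `v` as well: an almost orthonormal family is linearly independent.
-/

open Matrix

lemma norm_star_dotProduct_mulVec_le {ι R : Type*} [Fintype ι] [NonUnitalSeminormedRing R]
    [StarAddMonoid R] [NormedStarGroup R] {M : Matrix ι ι R} {ε : ℝ} (hM : ∀ i j, ‖M i j‖ ≤ ε)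
    (c : ι → R) : ‖star c ⬝ᵥ M *ᵥ c‖ ≤ Fintype.card ι * ε * ∑ i, ‖c i‖ ^ 2 := by
  rcases isEmpty_or_nonempty ι with _ | ⟨⟨i₀⟩⟩
  · simp
  have hε : 0 ≤ ε := (norm_nonneg _).trans (hM i₀ i₀)
  have hcs : (∑ i, ‖c i‖) ^ 2 ≤ Fintype.card ι * ∑ i, ‖c i‖ ^ 2 :=
    sq_sum_le_card_mul_sum_sq
  calc ‖star c ⬝ᵥ M *ᵥ c‖
      ≤ ∑ i, ‖c i‖ * ∑ j, ‖M i j‖ * ‖c j‖ := by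
        refine norm_sum_le_of_le _ fun i _ => ?_
        refine (norm_mul_le _ _).trans ?_
        rw [Pi.star_apply, norm_star]
        gcongr
        exact norm_sum_le_of_le _ fun j _ => norm_mul_le _ _
    _ ≤ ∑ i, ‖c i‖ * ∑ j, ε * ‖c j‖ := by
        gcongr
        exact hM _ _
    _ = ε * (∑ i, ‖c i‖) ^ 2 := by
        rw [← Finset.mul_sum, ← Finset.sum_mul]
        ring
    _ ≤ ε * (Fintype.card ι * ∑ i, ‖c i‖ ^ 2) := by gcongr
    _ = Fintype.card ι * ε * ∑ i, ‖c i‖ ^ 2 := by ring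

/-- The family `v` is orthonormal up to an error of `ε` in each entry of its Gram matrix. -/
def AlmostOrthonormal (𝕜 : Type*) {ι H : Type*} [RCLike 𝕜] [DecidableEq ι]
    [SeminormedAddCommGroup H] [InnerProductSpace 𝕜 H] (ε : ℝ) (v : ι → H) : Prop :=
  ∀ i j, ‖inner 𝕜 (v i) (v j) - if i = j then 1 else 0‖ ≤ ε

namespace AlmostOrthonormal

variable {𝕜 ι H : Type*} [RCLike 𝕜] [Fintype ι] [DecidableEq ι] [SeminormedAddCommGroup H]
  [InnerProductSpace 𝕜 H] {ε : ℝ} {v : ι → H}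

lemma abs_norm_sum_smul_sq_sub_sum_norm_sq_le (hv : AlmostOrthonormal 𝕜 ε v) (c : ι → 𝕜) :
    |‖∑ i, c i • v i‖ ^ 2 - ∑ i, ‖c i‖ ^ 2| ≤ Fintype.card ι * ε * ∑ i, ‖c i‖ ^ 2 := by
  have hgram : ∀ i j, ‖(gram 𝕜 v - 1) i j‖ ≤ ε := fun i j => by
    simpa only [Matrix.sub_apply, gram_apply, one_apply] using hv i j
  have hform : star c ⬝ᵥ (gram 𝕜 v - 1) *ᵥ c =
      ((‖∑ i, c i • v i‖ ^ 2 - ∑ i, ‖c i‖ ^ 2 : ℝ) : 𝕜) := by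
    rw [sub_mulVec, one_mulVec, dotProduct_sub, star_dotProduct_gram_mulVec,
      inner_self_eq_norm_sq_to_K]
    simp [dotProduct, RCLike.conj_mul]
  simpa only [hform, RCLike.norm_ofReal] using norm_star_dotProduct_mulVec_le hgram c

lemma mul_sum_norm_sq_le_norm_sum_smul_sq (hv : AlmostOrthonormal 𝕜 ε v) (c : ι → 𝕜) :
    (1 - Fintype.card ι * ε) * ∑ i, ‖c i‖ ^ 2 ≤ ‖∑ i, c i • v i‖ ^ 2 := by
  linarith [(abs_le.mp (hv.abs_norm_sum_smul_sq_sub_sum_norm_sq_le c)).1]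

lemma linearIndependent (hv : AlmostOrthonormal 𝕜 ε v) (hε : Fintype.card ι * ε < 1) :
    LinearIndependent 𝕜 v := by
  rw [Fintype.linearIndependent_iff]
  intro c hc i
  have hsum : (1 - Fintype.card ι * ε) * ∑ i, ‖c i‖ ^ 2 ≤ 0 := by
    simpa [hc] using hv.mul_sum_norm_sq_le_norm_sum_smul_sq c
  have hi : ‖c i‖ ^ 2 ≤ ∑ i, ‖c i‖ ^ 2 :=
    Finset.single_le_sum (fun j _ => sq_nonneg ‖c j‖) (Finset.mem_univ i)
  have hzero : ‖c i‖ ^ 2 ≤ 0 := hi.trans (nonpos_of_mul_nonpos_right hsum (by linarith))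
  simpa using hzero

end AlmostOrthonormal

lemma isUnit_of_linearIndependent_sum_smul {ι K M : Type*} [Fintype ι] [DecidableEq ι] [Field K]
    [AddCommMonoid M] [Module K M] {A : Matrix ι ι K} {f v : ι → M}
    (hv : ∀ i, v i = ∑ j, A i j • f j) (hli : LinearIndependent K v) : IsUnit A := by
  rw [← linearIndependent_rows_iff_isUnit]
  refine LinearIndependent.of_comp (Fintype.linearCombination K f) ?_
  convert hli using 1
  exact funext fun i => (hv i).symm

lemma sum_inv_smul_eq {ι R M : Type*} [Fintype ι] [DecidableEq ι] [CommRing R] [AddCommMonoid M]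
    [Module R M] {A : Matrix ι ι R} {f v : ι → M} (hA : IsUnit A)
    (hv : ∀ i, v i = ∑ j, A i j • f j) (i : ι) : ∑ j, A⁻¹ i j • v j = f i := by
  calc ∑ j, A⁻¹ i j • v j = ∑ l, (A⁻¹ * A) i l • f l := by
        simp only [hv, Finset.smul_sum, smul_smul, mul_apply, Finset.sum_smul]
        exact Finset.sum_comm
    _ = f i := by
        simp [nonsing_inv_mul A ((isUnit_iff_isUnit_det A).mp hA), one_apply]

lemma mul_apply_self_of_isLowerTriangular {ι R : Type*} [Fintype ι] [LinearOrder ι]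
    [NonUnitalNonAssocSemiring R] {A B : Matrix ι ι R} (hA : A.IsLowerTriangular)
    (hB : B.IsLowerTriangular) (i : ι) : (A * B) i i = A i i * B i i := by
  rw [mul_apply]
  refine Fintype.sum_eq_single i fun j hj => ?_
  rcases hj.lt_or_gt with hlt | hgt
  · rw [hB hlt, mul_zero]
  · rw [hA hgt, zero_mul]

lemma inv_apply_self_mul_apply_self_of_isLowerTriangular {ι R : Type*} [Fintype ι]
    [LinearOrder ι] [CommRing R] {A : Matrix ι ι R} (hA : A.IsLowerTriangular) (hunit : IsUnit A)
    (i : ι) : A⁻¹ i i * A i i = 1 := by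
  have := hunit.invertible
  rw [← mul_apply_self_of_isLowerTriangular (blockTriangular_inv_of_blockTriangular hA) hA,
    inv_mul_of_invertible, one_apply_eq]

theorem AlmostOrthonormal.one_sub_card_mul_le_sq_norm_diag_mul_norm {𝕜 ι H : Type*}
    [RCLike 𝕜] [Fintype ι] [LinearOrder ι] [SeminormedAddCommGroup H] [InnerProductSpace 𝕜 H]
    {ε : ℝ} {f v : ι → H} {A : Matrix ι ι 𝕜} (hv : AlmostOrthonormal 𝕜 ε v)
    (hA : A.IsLowerTriangular) (hvf : ∀ i, v i = ∑ j, A i j • f j) (i : ι) :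
    1 - Fintype.card ι * ε ≤ (‖A i i‖ * ‖f i‖) ^ 2 := by
  rcases le_or_gt 1 (Fintype.card ι * ε) with hε | hε
  · exact (sub_nonpos.mpr hε).trans (sq_nonneg _)
  have hunit : IsUnit A := isUnit_of_linearIndependent_sum_smul hvf (hv.linearIndependent hε)
  have hdiag : ‖A⁻¹ i i‖ * ‖A i i‖ = 1 := by
    rw [← norm_mul, inv_apply_self_mul_apply_self_of_isLowerTriangular hA hunit, norm_one]
  have hrow : ‖A⁻¹ i i‖ ^ 2 ≤ ∑ j, ‖A⁻¹ i j‖ ^ 2 :=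
    Finset.single_le_sum (fun j _ => sq_nonneg ‖A⁻¹ i j‖) (Finset.mem_univ i)
  have hf : (1 - Fintype.card ι * ε) * ‖A⁻¹ i i‖ ^ 2 ≤ ‖f i‖ ^ 2 := by
    rw [← sum_inv_smul_eq hunit hvf i]
    exact (mul_le_mul_of_nonneg_left hrow (by linarith)).trans
      (hv.mul_sum_norm_sq_le_norm_sum_smul_sq _)
  calc 1 - Fintype.card ι * ε
      = (1 - Fintype.card ι * ε) * (‖A⁻¹ i i‖ * ‖A i i‖) ^ 2 := by
        rw [hdiag, one_pow, mul_one]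
    _ = ‖A i i‖ ^ 2 * ((1 - Fintype.card ι * ε) * ‖A⁻¹ i i‖ ^ 2) := by ring
    _ ≤ ‖A i i‖ ^ 2 * ‖f i‖ ^ 2 := by gcongr
    _ = (‖A i i‖ * ‖f i‖) ^ 2 := (mul_pow _ _ _).symm

theorem stmt_2_general {𝕜 ι H : Type*} [RCLike 𝕜] [Fintype ι] [LinearOrder ι]
    [SeminormedAddCommGroup H] [InnerProductSpace 𝕜 H] {f v : ι → H} {A : Matrix ι ι 𝕜} {i : ι}
    (hf : ‖f i‖ ≤ 2) (hA : A.IsLowerTriangular) (hvf : ∀ i, v i = ∑ j, A i j • f j)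
    (hv : AlmostOrthonormal 𝕜 (1 / (8 * Fintype.card ι)) v) : 1 / 3 ≤ ‖A i i‖ := by
  have : Nonempty ι := ⟨i⟩
  have hcard : (Fintype.card ι : ℝ) * (1 / (8 * Fintype.card ι)) = 1 / 8 := by field_simp
  have hlower : 1 - 1 / 8 ≤ (‖A i i‖ * ‖f i‖) ^ 2 := by
    simpa only [hcard] using hv.one_sub_card_mul_le_sq_norm_diag_mul_norm hA hvf i
  have hupper : (‖A i i‖ * ‖f i‖) ^ 2 ≤ (‖A i i‖ * 2) ^ 2 := by gcongr
  exact (sq_le_sq₀ (by norm_num) (norm_nonneg _)).mp (by linarith)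

/-- Abstract content of Theorem 3.5 part (b): when a lower triangular matrix A with positive
diagonal transforms an almost-unit family f into an almost-orthonormal family v = A ∘ f,
the diagonal entries of A are bounded below by 1/3. -/
theorem stmt_2 (k : ℕ) (hk : 1 ≤ k) {H : Type*} [NormedAddCommGroup H]
    [InnerProductSpace ℝ H]
    (f : Fin k → H) (hf : ∀ i, ‖f i‖ ≤ 2)
    (A : Matrix (Fin k) (Fin k) ℝ)
    (hlower : ∀ i j : Fin k, i < j → A i j = 0)
    (hdiag : ∀ i, 0 < A i i)
    (v : Fin k → H) (hv : ∀ i, v i = ∑ j, A i j • f j)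
    (hortho : ∀ i j : Fin k, |⟪v i, v j⟫ - if i = j then 1 else 0| ≤ 1 / (8 * k)) :
    ∀ i, 1 / 3 ≤ A i i := by
  intro i
  simpa [abs_of_pos (hdiag i)] using stmt_2_general (hf i) (fun i j => hlower i j) hv
    (by simpa [AlmostOrthonormal] using hortho)
end

section
/- Let k ≥ 2 be an integer, H a real inner product space, and 0 < ε ≤ 1/2. Suppose w₁, …, w_{k−1} ∈ H satisfy |⟨wᵢ, wⱼ⟩ − δᵢⱼ| ≤ ε for all 1 ≤ i, j ≤ k−1, and v ∈ H satisfies |⟨wᵢ, v⟩| ≤ ε for all i. Define aᵢ = −⟨wᵢ, v⟩/‖wᵢ‖² (well defined since ‖wᵢ‖² ≥ 1 − ε > 0) and u = v + Σ_{i=1}^{k−1} aᵢ wᵢ. Then |⟨u, wⱼ⟩| ≤ 2(k−2)ε² for every 1 ≤ j ≤ k−1, and ‖u‖² ≥ ‖v‖² − 4(k−1)ε². -/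
open scoped RealInnerProductSpace

/-! Up to sign, `a i • w i` is the orthogonal projection `P i v` of `v` onto the line of `w i`.
Since `v - P j v` is orthogonal to `w j`, pairing `v - ∑ i, P i v` with `w j` leaves only the cross
terms `⟪P i v, w j⟫` with `i ≠ j`, each a product of two small inner products. Since
`re ⟪P i v, v⟫ = ‖P i v‖ ^ 2`, the squared norm drops by at most `2 * ∑ i, ‖P i v‖ ^ 2`. -/

section GramSchmidtStep

open scoped InnerProductSpace

variable {𝕜 E ι : Type*} [RCLike 𝕜] [NormedAddCommGroup E] [InnerProductSpace 𝕜 E]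

section Projections

variable (s : Finset ι) (K : ι → Submodule 𝕜 E) [∀ i, (K i).HasOrthogonalProjection] (v : E)

lemma inner_sub_sum_starProjection [DecidableEq ι] {j : ι} (hj : j ∈ s) {x : E} (hx : x ∈ K j) :
    ⟪v - ∑ i ∈ s, (K i).starProjection v, x⟫_𝕜 =
      -∑ i ∈ s.erase j, ⟪(K i).starProjection v, x⟫_𝕜 := by
  rw [← Finset.add_sum_erase s _ hj, ← sub_sub, inner_sub_left,
    Submodule.starProjection_inner_eq_zero v x hx, zero_sub, sum_inner]

lemma norm_sub_sum_starProjection_sq :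
    ‖v - ∑ i ∈ s, (K i).starProjection v‖ ^ 2 =
      ‖v‖ ^ 2 - 2 * ∑ i ∈ s, ‖(K i).starProjection v‖ ^ 2 +
        ‖∑ i ∈ s, (K i).starProjection v‖ ^ 2 := by
  have hre : RCLike.re ⟪v, ∑ i ∈ s, (K i).starProjection v⟫_𝕜 =
      ∑ i ∈ s, ‖(K i).starProjection v‖ ^ 2 := by
    rw [inner_re_symm, sum_inner, map_sum]
    exact Finset.sum_congr rfl fun i _ => (K i).re_inner_starProjection_eq_normSq v
  rw [norm_sub_sq (𝕜 := 𝕜), hre]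

end Projections

lemma norm_inner_starProjection_singleton (w v x : E) :
    ‖⟪(𝕜 ∙ w).starProjection v, x⟫_𝕜‖ = ‖⟪w, v⟫_𝕜‖ * ‖⟪w, x⟫_𝕜‖ / ‖w‖ ^ 2 := by
  rw [Submodule.starProjection_singleton, inner_smul_left, norm_mul, RCLike.norm_conj, norm_div,
    RCLike.norm_ofReal, abs_of_nonneg (sq_nonneg _), div_mul_eq_mul_div]

lemma norm_starProjection_singleton_sq (w v : E) :
    ‖(𝕜 ∙ w).starProjection v‖ ^ 2 = ‖⟪w, v⟫_𝕜‖ ^ 2 / ‖w‖ ^ 2 := by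
  have hself : ⟪(𝕜 ∙ w).starProjection v, v⟫_𝕜 =
      ⟪(𝕜 ∙ w).starProjection v, (𝕜 ∙ w).starProjection v⟫_𝕜 := by
    rw [← Submodule.inner_starProjection_left_eq_right,
      Submodule.starProjection_eq_self_iff.mpr (Submodule.starProjection_apply_mem _ v)]
  rw [sq ‖⟪w, v⟫_𝕜‖, ← norm_inner_starProjection_singleton, hself, inner_self_eq_norm_sq_to_K,
    norm_pow, RCLike.norm_ofReal, abs_norm]

section Bounds

variable {s : Finset ι} {w : ι → E} {v : E} {c δ ε : ℝ}

lemma norm_inner_sub_sum_starProjection_singleton_le (hc : 0 < c)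
    (hnorm : ∀ i ∈ s, c ≤ ‖w i‖ ^ 2) (hv : ∀ i ∈ s, ‖⟪w i, v⟫_𝕜‖ ≤ ε) {j : ι} (hj : j ∈ s)
    (hw : ∀ i ∈ s, i ≠ j → ‖⟪w i, w j⟫_𝕜‖ ≤ δ) :
    ‖⟪v - ∑ i ∈ s, (𝕜 ∙ w i).starProjection v, w j⟫_𝕜‖ ≤ ((s.card : ℝ) - 1) * (ε * δ / c) := by
  classical
  have hterm : ∀ i ∈ s.erase j, ‖⟪(𝕜 ∙ w i).starProjection v, w j⟫_𝕜‖ ≤ ε * δ / c := by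
    intro i hi
    obtain ⟨hij, his⟩ := Finset.mem_erase.mp hi
    have hmul : ‖⟪w i, v⟫_𝕜‖ * ‖⟪w i, w j⟫_𝕜‖ ≤ ε * δ :=
      mul_le_mul (hv i his) (hw i his hij) (norm_nonneg _) ((norm_nonneg _).trans (hv i his))
    rw [norm_inner_starProjection_singleton]
    have hnonneg := mul_nonneg (norm_nonneg ⟪w i, v⟫_𝕜) (norm_nonneg ⟪w i, w j⟫_𝕜)
    exact div_le_div₀ (hnonneg.trans hmul) hmul hc (hnorm i his)
  rw [inner_sub_sum_starProjection _ _ _ hj (Submodule.mem_span_singleton_self (w j)), norm_neg,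
    ← Finset.cast_card_erase_of_mem hj, ← nsmul_eq_mul, ← Finset.sum_const]
  exact norm_sum_le_of_le _ hterm

lemma norm_sq_sub_le_norm_sub_sum_starProjection_singleton_sq (hc : 0 < c)
    (hnorm : ∀ i ∈ s, c ≤ ‖w i‖ ^ 2) (hv : ∀ i ∈ s, ‖⟪w i, v⟫_𝕜‖ ≤ ε) :
    ‖v‖ ^ 2 - 2 * (s.card * (ε ^ 2 / c)) ≤ ‖v - ∑ i ∈ s, (𝕜 ∙ w i).starProjection v‖ ^ 2 := by
  have hterm : ∀ i ∈ s, ‖(𝕜 ∙ w i).starProjection v‖ ^ 2 ≤ ε ^ 2 / c := fun i hi => by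
    rw [norm_starProjection_singleton_sq]
    gcongr
    exacts [hv i hi, hnorm i hi]
  have hsum : ∑ i ∈ s, ‖(𝕜 ∙ w i).starProjection v‖ ^ 2 ≤ s.card * (ε ^ 2 / c) := by
    simpa only [nsmul_eq_mul] using Finset.sum_le_card_nsmul s _ _ hterm
  rw [norm_sub_sum_starProjection_sq]
  linarith [sq_nonneg ‖∑ i ∈ s, (𝕜 ∙ w i).starProjection v‖]

end Bounds

theorem stmt_3_general [Fintype ι] {w : ι → E} {v u : E} {a : ι → 𝕜} {c δ ε : ℝ} (hc : 0 < c)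
    (hnorm : ∀ i, c ≤ ‖w i‖ ^ 2) (hw : Pairwise fun i j => ‖⟪w i, w j⟫_𝕜‖ ≤ δ)
    (hv : ∀ i, ‖⟪w i, v⟫_𝕜‖ ≤ ε) (ha : ∀ i, a i = -⟪w i, v⟫_𝕜 / ((‖w i‖ ^ 2 : ℝ) : 𝕜))
    (hu : u = v + ∑ i, a i • w i) :
    (∀ j, ‖⟪u, w j⟫_𝕜‖ ≤ ((Fintype.card ι : ℝ) - 1) * (ε * δ / c)) ∧
      ‖v‖ ^ 2 - 2 * (Fintype.card ι * (ε ^ 2 / c)) ≤ ‖u‖ ^ 2 := by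
  obtain rfl : u = v - ∑ i, (𝕜 ∙ w i).starProjection v := by
    simp only [hu, ha, Submodule.starProjection_singleton, neg_div, neg_smul,
      Finset.sum_neg_distrib, sub_eq_add_neg]
  exact ⟨fun j => norm_inner_sub_sum_starProjection_singleton_le hc (fun i _ => hnorm i)
      (fun i _ => hv i) (Finset.mem_univ j) fun _ _ hij => hw hij,
    norm_sq_sub_le_norm_sub_sum_starProjection_singleton_sq hc (fun i _ => hnorm i)
      fun i _ => hv i⟩

end GramSchmidtStep

/-- Quantitative stability of one Gram–Schmidt-type correction step (Appendix A of the
paper, following Bamler). -/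
theorem stmt_3 (k : ℕ) (hk : 2 ≤ k) {H : Type*} [NormedAddCommGroup H]
    [InnerProductSpace ℝ H] (ε : ℝ) (hε : 0 < ε) (hε' : ε ≤ 1 / 2)
    (w : Fin (k - 1) → H)
    (hw : ∀ i j : Fin (k - 1), |⟪w i, w j⟫ - if i = j then 1 else 0| ≤ ε)
    (v : H) (hv : ∀ i, |⟪w i, v⟫| ≤ ε)
    (a : Fin (k - 1) → ℝ) (ha : ∀ i, a i = -⟪w i, v⟫ / ‖w i‖ ^ 2)
    (u : H) (hu : u = v + ∑ i, a i • w i) :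
    (∀ j, |⟪u, w j⟫| ≤ 2 * ((k : ℝ) - 2) * ε ^ 2) ∧
      ‖v‖ ^ 2 - 4 * ((k : ℝ) - 1) * ε ^ 2 ≤ ‖u‖ ^ 2 := by
  have hnorm : ∀ i, 1 / 2 ≤ ‖w i‖ ^ 2 := fun i => by
    have hdiag : |‖w i‖ ^ 2 - 1| ≤ ε := by simpa using hw i i
    linarith [neg_le_of_abs_le hdiag]
  have hoff : Pairwise fun i j => ‖⟪w i, w j⟫‖ ≤ ε := fun i j hij => by simpa [hij] using hw i j
  have hcard : (Fintype.card (Fin (k - 1)) : ℝ) = k - 1 := by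
    rw [Fintype.card_fin, Nat.cast_pred (by lia)]
  obtain ⟨horth, hlower⟩ := stmt_3_general one_half_pos hnorm hoff hv ha hu
  rw [hcard] at hlower
  exact ⟨fun j => (horth j).trans_eq (by rw [hcard]; ring), by linarith⟩
end

section
/- Let n ≥ 1 be an integer, α ∈ (0,1], z ∈ ℝⁿ, η > 0, and x ∈ B(z, η). Then ∫_{B(z,2η)} ‖y − z‖^{α} ‖x − y‖^{−(n−1)} dy ≤ 6 n ω_n η^{1+α}, where ω_n is the Lebesgue measure of the unit ball of ℝⁿ. -/
open MeasureTheory Metric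

/-!
Replace the factor `‖y - z‖ ^ α` by the bound `(2η) ^ α` on `B(z, 2η)`, and enlarge the domain of
the remaining integral to the ball `B(x, 3η) ⊇ B(z, 2η)`, on which the singular kernel is radial.
In polar coordinates `∫_{B(x, r)} ‖x - y‖ ^ p dy = ω_d * d / (p + d) * r ^ (p + d)`; for
`p = 1 - d` this is `d * ω_d * r`.
-/

lemma preimage_const_sub_ball_zero {E : Type*} [SeminormedAddCommGroup E] (x : E) (r : ℝ) :
    (x - ·) ⁻¹' ball 0 r = ball x r := by
  ext y
  simp [dist_eq_norm, norm_sub_rev]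

section RieszKernel

variable {E F : Type*} [NormedAddCommGroup E] [NormedSpace ℝ E] [FiniteDimensional ℝ E]
  [MeasurableSpace E] [BorelSpace E] [NormedAddCommGroup F] [NormedSpace ℝ F]
  (μ : Measure E) [μ.IsAddHaarMeasure]

local notation "dim" => Module.finrank ℝ

lemma setIntegral_ball_fun_norm_addHaar [Nontrivial E] (f : ℝ → F) (r : ℝ) :
    ∫ x in ball (0 : E) r, f ‖x‖ ∂μ =
      dim E • μ.real (ball 0 1) • ∫ t in Set.Ioo 0 r, t ^ (dim E - 1) • f t := by
  have indicator_ball : (ball (0 : E) r).indicator (fun x ↦ f ‖x‖) =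
      fun x ↦ (Set.Iio r).indicator f ‖x‖ := by
    ext x
    simp [Set.indicator]
  rw [← integral_indicator measurableSet_ball, indicator_ball, integral_fun_norm_addHaar,
    ← Set.Ioi_inter_Iio, ← setIntegral_indicator measurableSet_Iio]
  simp only [Set.indicator_smul_apply]

lemma integrableOn_ball_norm_rpow {p : ℝ} (hp : -(dim E : ℝ) < p) (r : ℝ) :
    IntegrableOn (fun x : E ↦ ‖x‖ ^ p) (ball 0 r) μ := by
  cases subsingleton_or_nontrivial E
  · exact Integrable.of_finite
  · refine integrableOn_ball_of_norm_le_rpow (C := 1) (α := -p) Module.finrank_pos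
      (by linarith) (.of_forall fun x ↦ ?_)
      (measurable_norm.pow_const p).aestronglyMeasurable
    simp [abs_of_nonneg (Real.rpow_nonneg _ _)]

lemma setIntegral_ball_norm_rpow {p r : ℝ} (hp : -(dim E : ℝ) < p) (hr : 0 ≤ r) :
    ∫ x in ball (0 : E) r, ‖x‖ ^ p ∂μ =
      dim E / (p + dim E) * μ.real (ball (0 : E) 1) * r ^ (p + dim E) := by
  cases subsingleton_or_nontrivial E
  · have p_ne_zero : p ≠ 0 := by simpa [Module.finrank_zero_of_subsingleton] using hp.ne'
    simp [Subsingleton.elim _ (0 : E), Module.finrank_zero_of_subsingleton, p_ne_zero]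
  have radial : Set.EqOn (fun t : ℝ ↦ t ^ (dim E - 1) • t ^ p) (fun t ↦ t ^ (p + dim E - 1))
      (Set.Ioo 0 r) := by
    intro t ht
    dsimp only
    rw [smul_eq_mul, ← Real.rpow_natCast, ← Real.rpow_add ht.1, Nat.cast_pred Module.finrank_pos]
    ring_nf
  rw [setIntegral_ball_fun_norm_addHaar μ (· ^ p), setIntegral_congr_fun measurableSet_Ioo radial,
    ← integral_Ioc_eq_integral_Ioo, ← intervalIntegral.integral_of_le hr,
    integral_rpow (.inl (by linarith)), sub_add_cancel, Real.zero_rpow (by linarith), sub_zero,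
    nsmul_eq_mul, smul_eq_mul]
  ring

lemma integrableOn_ball_norm_sub_rpow {p : ℝ} (hp : -(dim E : ℝ) < p) (x : E) (r : ℝ) :
    IntegrableOn (fun y ↦ ‖x - y‖ ^ p) (ball x r) μ := by
  rw [← preimage_const_sub_ball_zero]
  exact ((Measure.measurePreserving_sub_left μ x).integrableOn_comp_preimage
    (MeasurableEquiv.subLeft x).measurableEmbedding).2 (integrableOn_ball_norm_rpow μ hp r)

lemma setIntegral_ball_norm_sub_rpow {p r : ℝ} (hp : -(dim E : ℝ) < p) (hr : 0 ≤ r) (x : E) :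
    ∫ y in ball x r, ‖x - y‖ ^ p ∂μ =
      dim E / (p + dim E) * μ.real (ball (0 : E) 1) * r ^ (p + dim E) := by
  rw [← preimage_const_sub_ball_zero, ← setIntegral_ball_norm_rpow μ hp hr]
  exact (Measure.measurePreserving_sub_left μ x).setIntegral_preimage_emb
    (MeasurableEquiv.subLeft x).measurableEmbedding (‖·‖ ^ p) _

lemma norm_setIntegral_norm_sub_rpow_smul_le {p r C : ℝ} (hp : -(dim E : ℝ) < p) (hr : 0 ≤ r)
    (hC : 0 ≤ C) {s : Set E} (hs : MeasurableSet s) {x : E} (hsx : s ⊆ ball x r) {f : E → F}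
    (hf : ∀ y ∈ s, ‖f y‖ ≤ C) :
    ‖∫ y in s, ‖x - y‖ ^ p • f y ∂μ‖ ≤
      dim E / (p + dim E) * μ.real (ball (0 : E) 1) * r ^ (p + dim E) * C := by
  have kernel_int : IntegrableOn (fun y ↦ ‖x - y‖ ^ p * C) (ball x r) μ :=
    (integrableOn_ball_norm_sub_rpow μ hp x r).mul_const C
  calc
    _ ≤ ∫ y in s, ‖x - y‖ ^ p * C ∂μ := by
      refine norm_integral_le_of_norm_le (kernel_int.mono_set hsx)
        (ae_restrict_of_forall_mem hs fun y hy ↦ ?_)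
      rw [norm_smul, Real.norm_of_nonneg (by positivity)]
      gcongr
      exact hf y hy
    _ ≤ ∫ y in ball x r, ‖x - y‖ ^ p * C ∂μ :=
      setIntegral_mono_set kernel_int (.of_forall fun y ↦ by positivity) hsx.eventuallyLE
    _ = _ := by rw [integral_mul_const, setIntegral_ball_norm_sub_rpow μ hp hr]

theorem stmt_10_general {α p η : ℝ} (hα : 0 ≤ α) (hp : -(dim E : ℝ) < p) {z x : E}
    (hx : x ∈ closedBall z η) :
    ∫ y in ball z (2 * η), ‖y - z‖ ^ α * ‖x - y‖ ^ p ∂μ ≤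
      2 ^ α * 3 ^ (p + dim E) * (dim E / (p + dim E)) * μ.real (ball (0 : E) 1) *
        η ^ (α + (p + dim E)) := by
  have hη : 0 ≤ η := nonempty_closedBall.1 ⟨x, hx⟩
  have ball_subset : ball z (2 * η) ⊆ ball x (3 * η) :=
    ball_subset_ball' (by linarith [mem_closedBall'.1 hx])
  have norm_rpow_le : ∀ y ∈ ball z (2 * η), ‖‖y - z‖ ^ α‖ ≤ (2 * η) ^ α := fun y hy ↦ by
    rw [Real.norm_of_nonneg (by positivity)]
    gcongr
    exact (mem_ball_iff_norm.1 hy).le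
  calc
    _ = ∫ y in ball z (2 * η), ‖x - y‖ ^ p • ‖y - z‖ ^ α ∂μ := by
      simp only [smul_eq_mul, mul_comm]
    _ ≤ dim E / (p + dim E) * μ.real (ball (0 : E) 1) * (3 * η) ^ (p + dim E) * (2 * η) ^ α :=
      (le_abs_self _).trans <| norm_setIntegral_norm_sub_rpow_smul_le μ hp (by positivity)
        (by positivity) measurableSet_ball ball_subset norm_rpow_le
    _ = _ := by
      rw [Real.mul_rpow zero_le_two hη, Real.mul_rpow zero_le_three hη,
        Real.rpow_add_of_nonneg hη hα (by linarith)]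
      ring

end RieszKernel

/-- Convolution-type estimate from inequality (2.21) in Step 2 of the proof of
Theorem 1.2: for x ∈ B(z,η),
∫_{B(z,2η)} ‖y-z‖^α ‖x-y‖^{-(n-1)} dy ≤ 6 n ωₙ η^{1+α}. -/
theorem stmt_10 (n : ℕ) (hn : 1 ≤ n) (α : ℝ) (hα : 0 < α) (hα1 : α ≤ 1)
    (z x : EuclideanSpace ℝ (Fin n)) (η : ℝ) (hη : 0 < η) (hx : x ∈ ball z η) :
    (∫ y in ball z (2 * η), ‖y - z‖ ^ α * ‖x - y‖ ^ (-((n : ℝ) - 1))) ≤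
      6 * n * (volume (ball (0 : EuclideanSpace ℝ (Fin n)) 1)).toReal *
        η ^ (1 + α) := by
  refine (stmt_10_general volume hα.le (by simp) (ball_subset_closedBall hx)).trans ?_
  simp only [finrank_euclideanSpace_fin, neg_sub, sub_add_cancel, Real.rpow_one, div_one]
  grw [Real.rpow_le_self_of_one_le one_le_two hα1]
  norm_num [Measure.real, add_comm α]
end
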